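/- arXiv:2405.14901 — 2 statements merged into one kernel-verified Lean document; each statement's English description precedes it below -/
import Mathlib

section
/- Let a > 0, b ≥ 1, c ≥ b+1, α ≥ 1, β ≥ α+1, p > 0 and z ∈ ℝ with |z| < 1. Then ₂F₁^{(α,β;p)}(a,b;c;z) ≤ (λ_{α−1,β−α−1}/(4 p B(α,β−α))) · ₂F₁(a,b;c;z). -/
/-!
Integrating `exp (s t)` and `(1 - z t) ^ (-a)` termwise against the weight `t^(x-1) (1-t)^(y-1)`
gives the Euler integrals of `₁F₁` and `₂F₁`. By weighted AM-GM the weight in the first one is at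
most `λ_{α-1,β-α-1}`, and `∫₀¹ exp (-s t) dt ≤ 1/s`, so `₁F₁(α;β;-s)` is at most
`λ_{α-1,β-α-1} / (s B(α,β-α))`. In the integrand of the generalized function
`s = p / (t (1-t)) ≥ 4 p`, so the `₁F₁` factor comes out of the integral and leaves the Euler
integral of `₂F₁`.
-/

open Real MeasureTheory

/-- Classical Euler beta function `B(x,y) = ∫₀¹ t^(x-1) (1-t)^(y-1) dt`. -/
noncomputable def eulerBeta (x y : ℝ) : ℝ :=
  ∫ t in (0:ℝ)..1, t ^ (x - 1) * (1 - t) ^ (y - 1)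

/-- `λ_{x,y} = x^x y^y / (x+y)^(x+y)`; the convention `0^0 = 1` is automatic for `rpow`. -/
noncomputable def lam (x y : ℝ) : ℝ := x ^ x * y ^ y / (x + y) ^ (x + y)

/-- Pochhammer symbol `(x)_n = x (x+1) ⋯ (x+n-1)`. -/
noncomputable def poch (x : ℝ) (n : ℕ) : ℝ := ∏ k ∈ Finset.range n, (x + k)

/-- Confluent hypergeometric (Kummer) function `₁F₁(b;c;z)`. -/
noncomputable def oneF1 (b c z : ℝ) : ℝ :=
  ∑' n : ℕ, poch b n / poch c n * z ^ n / (Nat.factorial n : ℝ)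

/-- Gauss hypergeometric function `₂F₁(a,b;c;z)`. -/
noncomputable def twoF1 (a b c z : ℝ) : ℝ :=
  ∑' n : ℕ, poch a n * poch b n / poch c n * z ^ n / (Nat.factorial n : ℝ)

/-- Generalized Gauss hypergeometric function `₂F₁^(α,β;p)(a,b;c;z)` (integral form). -/
noncomputable def genTwoF1 (α β p a b c z : ℝ) : ℝ :=
  (1 / eulerBeta b (c - b)) *
    ∫ t in (0:ℝ)..1,
      t ^ (b - 1) * (1 - t) ^ (c - b - 1) * (1 - z * t) ^ (-a) *
        oneF1 α β (-p / (t * (1 - t)))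

lemma poch_succ (x : ℝ) (n : ℕ) : poch x (n + 1) = poch x n * (x + n) :=
  Finset.prod_range_succ _ n

lemma poch_pos {x : ℝ} (hx : 0 < x) (n : ℕ) : 0 < poch x n :=
  Finset.prod_pos fun _ _ => by positivity

lemma poch_eq_ascPochhammer_eval (x : ℝ) (n : ℕ) : poch x n = (ascPochhammer ℝ n).eval x := by
  induction n with
  | zero => simp [poch]
  | succ n ih => rw [poch_succ, ih, ascPochhammer_succ_eval]

lemma ringChoose_add_sub_one_eq_poch_div_factorial (a : ℝ) (n : ℕ) :
    Ring.choose (a + n - 1) n = poch a n / (n.factorial : ℝ) := by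
  rw [eq_div_iff (by positivity), ← Ring.multichoose_eq, mul_comm, ← nsmul_eq_mul,
    Ring.factorial_nsmul_multichoose_eq_ascPochhammer, Polynomial.ascPochhammer_smeval_eq_eval,
    poch_eq_ascPochhammer_eval]

lemma hasSum_poch_div_factorial_mul_pow (a : ℝ) {x : ℝ} (hx : |x| < 1) :
    HasSum (fun n : ℕ => poch a n / (n.factorial : ℝ) * x ^ n) ((1 - x) ^ (-a)) := by
  have hseries := (one_div_one_sub_rpow_hasFPowerSeriesOnBall_zero a).hasSum (y := x)
    (by simpa [enorm_eq_nnnorm] using! hx)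
  rw [zero_add, one_div, ← rpow_neg (by linarith [(abs_lt.1 hx).2])] at hseries
  simpa [ringChoose_add_sub_one_eq_poch_div_factorial, mul_comm] using hseries

lemma Gamma_add_natCast_eq_poch_mul_Gamma {x : ℝ} (n : ℕ) (hx : ∀ k < n, x + (k : ℝ) ≠ 0) :
    Gamma (x + n) = poch x n * Gamma x := by
  induction n with
  | zero => simp [poch]
  | succ n ih =>
    rw [Nat.cast_succ, ← add_assoc, Gamma_add_one (hx n n.lt_succ_self),
      ih fun k hk => hx k (hk.trans n.lt_succ_self), poch_succ]
    ring

lemma ofReal_rpow_mul_one_sub_rpow (x y : ℝ) {t : ℝ} (ht : t ∈ Set.Icc (0 : ℝ) 1) :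
    ((t ^ (x - 1) * (1 - t) ^ (y - 1) : ℝ) : ℂ) =
      (t : ℂ) ^ ((x : ℂ) - 1) * (1 - (t : ℂ)) ^ ((y : ℂ) - 1) := by
  rw [Complex.ofReal_mul, Complex.ofReal_cpow ht.1, Complex.ofReal_cpow (sub_nonneg.2 ht.2)]
  push_cast
  rfl

lemma ofReal_eulerBeta (x y : ℝ) : (eulerBeta x y : ℂ) = Complex.betaIntegral x y := by
  rw [eulerBeta, Complex.betaIntegral, ← intervalIntegral.integral_ofReal]
  refine intervalIntegral.integral_congr fun t ht => ofReal_rpow_mul_one_sub_rpow x y ?_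
  rwa [Set.uIcc_of_le zero_le_one] at ht

lemma eulerBeta_eq_beta {x y : ℝ} (hx : 0 < x) (hy : 0 < y) :
    eulerBeta x y = ProbabilityTheory.beta x y := by
  rw [ProbabilityTheory.beta_eq_betaIntegralReal x y hx hy, ← ofReal_eulerBeta, Complex.ofReal_re]

lemma eulerBeta_pos {x y : ℝ} (hx : 0 < x) (hy : 0 < y) : 0 < eulerBeta x y :=
  eulerBeta_eq_beta hx hy ▸ ProbabilityTheory.beta_pos hx hy

lemma intervalIntegrable_rpow_mul_one_sub_rpow {x y : ℝ} (hx : 0 < x) (hy : 0 < y) :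
    IntervalIntegrable (fun t : ℝ => t ^ (x - 1) * (1 - t) ^ (y - 1)) volume 0 1 := by
  have hcomplex := Complex.betaIntegral_convergent (u := x) (v := y) (by simpa) (by simpa)
  rw [intervalIntegrable_iff_integrableOn_Ioc_of_le zero_le_one] at hcomplex ⊢
  refine IntegrableOn.congr_fun hcomplex.re (fun t ht => ?_) measurableSet_Ioc
  simp only [← ofReal_rpow_mul_one_sub_rpow x y (Set.Ioc_subset_Icc_self ht)]
  exact Complex.ofReal_re _

lemma rpow_mul_one_sub_rpow_nonneg (x y : ℝ) {t : ℝ} (ht : t ∈ Set.Icc (0 : ℝ) 1) :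
    0 ≤ t ^ (x - 1) * (1 - t) ^ (y - 1) :=
  mul_nonneg (rpow_nonneg ht.1 _) (rpow_nonneg (sub_nonneg.2 ht.2) _)

lemma integral_rpow_mul_one_sub_rpow_mul_pow (x y : ℝ) (n : ℕ) :
    ∫ t in (0 : ℝ)..1, t ^ (x - 1) * (1 - t) ^ (y - 1) * t ^ n = eulerBeta (x + n) y := by
  refine intervalIntegral.integral_congr_Ioo_of_le zero_le_one fun t ht => ?_
  simp only [show x + n - 1 = (x - 1) + n by ring, rpow_add ht.1, rpow_natCast]
  ring

lemma eulerBeta_add_natCast {x y : ℝ} (hx : 0 < x) (hy : 0 < y) (n : ℕ) :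
    eulerBeta (x + n) y = poch x n / poch (x + y) n * eulerBeta x y := by
  have hpoch := (poch_pos (add_pos hx hy) n).ne'
  have hGamma := (Gamma_pos_of_pos (add_pos hx hy)).ne'
  rw [eulerBeta_eq_beta hx hy, eulerBeta_eq_beta (by positivity) hy, ProbabilityTheory.beta,
    ProbabilityTheory.beta, add_right_comm,
    Gamma_add_natCast_eq_poch_mul_Gamma n fun k _ => by positivity,
    Gamma_add_natCast_eq_poch_mul_Gamma n fun k _ => by positivity]
  field_simp

theorem hasSum_integral_rpow_mul_one_sub_rpow_mul {x y : ℝ} (hx : 0 < x) (hy : 0 < y)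
    {A : ℕ → ℝ} {f : ℝ → ℝ}
    (hf : ∀ t ∈ Set.Icc (0 : ℝ) 1, HasSum (fun n => A n * t ^ n) (f t)) :
    HasSum (fun n => A n * (poch x n / poch (x + y) n * eulerBeta x y))
      (∫ t in (0 : ℝ)..1, t ^ (x - 1) * (1 - t) ^ (y - 1) * f t) := by
  have hweight := intervalIntegrable_rpow_mul_one_sub_rpow hx hy
  have hA : Summable fun n => |A n| := by
    simpa using (hf 1 (Set.right_mem_Icc.2 zero_le_one)).summable.abs
  have hterm (n : ℕ) : A n * (poch x n / poch (x + y) n * eulerBeta x y) =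
      ∫ t in (0 : ℝ)..1, t ^ (x - 1) * (1 - t) ^ (y - 1) * (A n * t ^ n) := by
    simp only [← eulerBeta_add_natCast hx hy, ← integral_rpow_mul_one_sub_rpow_mul_pow,
      ← intervalIntegral.integral_const_mul, mul_left_comm (A n)]
  simp only [hterm]
  refine intervalIntegral.hasSum_integral_of_dominated_convergence
    (fun n t => t ^ (x - 1) * (1 - t) ^ (y - 1) * |A n|) (fun n => ?_) (fun n => ?_) ?_ ?_ ?_
  · exact (hweight.mul_continuousOn (by fun_prop)).def'.aestronglyMeasurable
  · filter_upwards with t ht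
    rw [Set.uIoc_of_le zero_le_one] at ht
    rw [norm_mul, norm_of_nonneg (rpow_mul_one_sub_rpow_nonneg x y (Set.Ioc_subset_Icc_self ht)),
      norm_mul, norm_pow, norm_of_nonneg ht.1.le, norm_eq_abs]
    exact mul_le_mul_of_nonneg_left
      (mul_le_of_le_one_right (abs_nonneg _) (pow_le_one₀ ht.1.le ht.2))
      (rpow_mul_one_sub_rpow_nonneg x y (Set.Ioc_subset_Icc_self ht))
  · filter_upwards with t _ using hA.mul_left _
  · simpa only [tsum_mul_left] using hweight.mul_const _
  · filter_upwards with t ht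
    rw [Set.uIoc_of_le zero_le_one] at ht
    exact (hf t (Set.Ioc_subset_Icc_self ht)).mul_left _

lemma hasSum_pow_div_factorial (x : ℝ) :
    HasSum (fun n : ℕ => x ^ n / (n.factorial : ℝ)) (exp x) := by
  rw [exp_eq_exp_ℝ]
  exact NormedSpace.expSeries_div_hasSum_exp x

theorem integral_rpow_mul_one_sub_rpow_mul_exp {α β : ℝ} (hα : 0 < α) (hβ : α < β) (s : ℝ) :
    ∫ t in (0 : ℝ)..1, t ^ (α - 1) * (1 - t) ^ (β - α - 1) * exp (s * t) =
      eulerBeta α (β - α) * oneF1 α β s := by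
  have hseries (t : ℝ) (_ : t ∈ Set.Icc (0 : ℝ) 1) :
      HasSum (fun n : ℕ => s ^ n / (n.factorial : ℝ) * t ^ n) (exp (s * t)) := by
    simpa only [mul_pow, mul_div_right_comm] using hasSum_pow_div_factorial (s * t)
  rw [← (hasSum_integral_rpow_mul_one_sub_rpow_mul hα (sub_pos.2 hβ) hseries).tsum_eq, oneF1,
    ← tsum_mul_left, add_sub_cancel]
  exact tsum_congr fun n => by ring

lemma abs_mul_lt_one_of_mem_Icc {z t : ℝ} (hz : |z| < 1) (ht : t ∈ Set.Icc (0 : ℝ) 1) :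
    |z * t| < 1 := by
  rw [abs_mul, abs_of_nonneg ht.1]
  exact (mul_le_of_le_one_right (abs_nonneg z) ht.2).trans_lt hz

theorem integral_rpow_mul_one_sub_rpow_mul_one_sub_mul_rpow (a : ℝ) {b c z : ℝ} (hb : 0 < b)
    (hc : b < c) (hz : |z| < 1) :
    ∫ t in (0 : ℝ)..1, t ^ (b - 1) * (1 - t) ^ (c - b - 1) * (1 - z * t) ^ (-a) =
      eulerBeta b (c - b) * twoF1 a b c z := by
  have hseries (t : ℝ) (ht : t ∈ Set.Icc (0 : ℝ) 1) :
      HasSum (fun n : ℕ => poch a n / (n.factorial : ℝ) * z ^ n * t ^ n)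
        ((1 - z * t) ^ (-a)) := by
    simpa only [mul_pow, mul_assoc] using
      hasSum_poch_div_factorial_mul_pow a (abs_mul_lt_one_of_mem_Icc hz ht)
  rw [← (hasSum_integral_rpow_mul_one_sub_rpow_mul hb (sub_pos.2 hc) hseries).tsum_eq, twoF1,
    ← tsum_mul_left, add_sub_cancel]
  exact tsum_congr fun n => by ring

lemma rpow_self_mul_div_rpow {x u : ℝ} (hx : 0 ≤ x) (hu : 0 ≤ u) :
    x ^ x * (u / x) ^ x = u ^ x := by
  rcases hx.eq_or_lt with rfl | hx
  · simp
  · rw [← mul_rpow hx.le (by positivity), mul_div_cancel₀ u hx.ne']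

lemma lam_nonneg {x y : ℝ} (hx : 0 ≤ x) (hy : 0 ≤ y) : 0 ≤ lam x y := by
  unfold lam
  positivity

theorem rpow_mul_rpow_le_lam_mul_add_rpow {x y u v : ℝ} (hx : 0 ≤ x) (hy : 0 ≤ y) (hu : 0 ≤ u)
    (hv : 0 ≤ v) : u ^ x * v ^ y ≤ lam x y * (u + v) ^ (x + y) := by
  rcases (add_nonneg hx hy).eq_or_lt with hs | hs
  · obtain ⟨rfl, rfl⟩ := (add_eq_zero_iff_of_nonneg hx hy).1 hs.symm
    simp [lam]
  have hcancel (w r : ℝ) (hr : 0 ≤ r) : w / (x + y) * (r / w) ≤ r / (x + y) := by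
    rcases eq_or_ne w 0 with rfl | hw
    · simpa using div_nonneg hr hs.le
    · exact le_of_eq (by field_simp)
  have amgm : (u / x) ^ (x / (x + y)) * (v / y) ^ (y / (x + y)) ≤ (u + v) / (x + y) :=
    calc (u / x) ^ (x / (x + y)) * (v / y) ^ (y / (x + y))
        ≤ x / (x + y) * (u / x) + y / (x + y) * (v / y) :=
          geom_mean_le_arith_mean2_weighted (by positivity) (by positivity) (by positivity)
            (by positivity) (by field_simp)
      _ ≤ (u + v) / (x + y) :=
          (add_le_add (hcancel x u hu) (hcancel y v hv)).trans_eq (add_div u v _).symm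
  have hpow : (u / x) ^ x * (v / y) ^ y ≤ ((u + v) / (x + y)) ^ (x + y) := by
    have h := rpow_le_rpow (by positivity) amgm hs.le
    rwa [mul_rpow (by positivity) (by positivity), ← rpow_mul (by positivity),
      ← rpow_mul (by positivity), div_mul_cancel₀ _ hs.ne', div_mul_cancel₀ _ hs.ne'] at h
  calc u ^ x * v ^ y = x ^ x * y ^ y * ((u / x) ^ x * (v / y) ^ y) := by
        rw [← rpow_self_mul_div_rpow hx hu, ← rpow_self_mul_div_rpow hy hv]
        ring
    _ ≤ x ^ x * y ^ y * ((u + v) / (x + y)) ^ (x + y) := by gcongr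
    _ = lam x y * (u + v) ^ (x + y) := by
        rw [div_rpow (by positivity) hs.le, lam]
        ring

lemma integral_exp_neg_mul_le_one_div {s : ℝ} (hs : 0 < s) (T : ℝ) :
    ∫ t in (0 : ℝ)..T, exp (-s * t) ≤ 1 / s := by
  have hint : ∫ t in (0 : ℝ)..T, exp (-s * t) = (1 - exp (-s * T)) / s := by
    rw [intervalIntegral.integral_comp_mul_left exp (neg_ne_zero.2 hs.ne'), integral_exp,
      mul_zero, exp_zero, smul_eq_mul, inv_neg]
    ring
  rw [hint]
  gcongr
  exact sub_le_self _ (exp_pos _).le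

lemma oneF1_nonneg {α β : ℝ} (hα : 0 < α) (hβ : α < β) (s : ℝ) : 0 ≤ oneF1 α β s := by
  refine nonneg_of_mul_nonneg_right ?_ (eulerBeta_pos hα (sub_pos.2 hβ))
  rw [← integral_rpow_mul_one_sub_rpow_mul_exp hα hβ]
  exact intervalIntegral.integral_nonneg zero_le_one fun t ht =>
    mul_nonneg (rpow_mul_one_sub_rpow_nonneg _ _ ht) (exp_pos _).le

theorem oneF1_neg_le_lam_div {α β s : ℝ} (hα : 1 ≤ α) (hβ : α + 1 ≤ β) (hs : 0 < s) :
    oneF1 α β (-s) ≤ lam (α - 1) (β - α - 1) / (s * eulerBeta α (β - α)) := by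
  have hα₀ : 0 < α := by linarith
  have hαβ : α < β := by linarith
  have hx : 0 ≤ α - 1 := by linarith
  have hy : 0 ≤ β - α - 1 := by linarith
  have hB := eulerBeta_pos hα₀ (sub_pos.2 hαβ)
  have hlaplace : eulerBeta α (β - α) * oneF1 α β (-s) ≤ lam (α - 1) (β - α - 1) * (1 / s) :=
    calc eulerBeta α (β - α) * oneF1 α β (-s)
        = ∫ t in (0 : ℝ)..1, t ^ (α - 1) * (1 - t) ^ (β - α - 1) * exp (-s * t) :=
          (integral_rpow_mul_one_sub_rpow_mul_exp hα₀ hαβ _).symm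
      _ ≤ ∫ t in (0 : ℝ)..1, lam (α - 1) (β - α - 1) * exp (-s * t) := by
          refine intervalIntegral.integral_mono_on zero_le_one
            ((intervalIntegrable_rpow_mul_one_sub_rpow hα₀ (sub_pos.2 hαβ)).mul_continuousOn
              (by fun_prop))
            (Continuous.intervalIntegrable (by fun_prop) _ _) fun t ht => ?_
          gcongr
          simpa using rpow_mul_rpow_le_lam_mul_add_rpow hx hy ht.1 (sub_nonneg.2 ht.2)
      _ = lam (α - 1) (β - α - 1) * ∫ t in (0 : ℝ)..1, exp (-s * t) :=
          intervalIntegral.integral_const_mul _ _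
      _ ≤ lam (α - 1) (β - α - 1) * (1 / s) :=
          mul_le_mul_of_nonneg_left (integral_exp_neg_mul_le_one_div hs 1) (lam_nonneg hx hy)
  rwa [← div_div, le_div_iff₀' hB, div_eq_mul_one_div]

lemma four_mul_le_div_mul_one_sub {p t : ℝ} (hp : 0 ≤ p) (ht : t ∈ Set.Ioo (0 : ℝ) 1) :
    4 * p ≤ p / (t * (1 - t)) := by
  have hquarter : 4 * t * (1 - t) ≤ 1 := by simpa using four_mul_le_sq_add t (1 - t)
  rw [le_div_iff₀ (mul_pos ht.1 (sub_pos.2 ht.2))]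
  calc 4 * p * (t * (1 - t)) = p * (4 * t * (1 - t)) := by ring
    _ ≤ p := mul_le_of_le_one_right hp hquarter

theorem oneF1_neg_div_mul_one_sub_le {α β p t : ℝ} (hα : 1 ≤ α) (hβ : α + 1 ≤ β) (hp : 0 < p)
    (ht : t ∈ Set.Ioo (0 : ℝ) 1) :
    oneF1 α β (-p / (t * (1 - t))) ≤
      lam (α - 1) (β - α - 1) / (4 * p * eulerBeta α (β - α)) := by
  have hs := four_mul_le_div_mul_one_sub hp.le ht
  have hB : 0 < eulerBeta α (β - α) := eulerBeta_pos (by linarith) (by linarith)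
  have hlam : 0 ≤ lam (α - 1) (β - α - 1) := lam_nonneg (by linarith) (by linarith)
  rw [neg_div]
  exact (oneF1_neg_le_lam_div hα hβ (by linarith)).trans (by gcongr)

theorem genTwoF1_le_mul_twoF1 (a : ℝ) {α β p b c z K : ℝ} (hb : 0 < b) (hc : b < c)
    (hα : 0 < α) (hβ : α < β) (hz : |z| < 1)
    (hK : ∀ t ∈ Set.Ioo (0 : ℝ) 1, oneF1 α β (-p / (t * (1 - t))) ≤ K) :
    genTwoF1 α β p a b c z ≤ K * twoF1 a b c z := by
  have hB := eulerBeta_pos hb (sub_pos.2 hc)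
  have hbase {t : ℝ} (ht : t ∈ Set.Icc (0 : ℝ) 1) : 0 < 1 - z * t :=
    sub_pos.2 (abs_lt.1 (abs_mul_lt_one_of_mem_Icc hz ht)).2
  set w : ℝ → ℝ := fun t => t ^ (b - 1) * (1 - t) ^ (c - b - 1) * (1 - z * t) ^ (-a) with hw
  have hw_nonneg {t : ℝ} (ht : t ∈ Set.Icc (0 : ℝ) 1) : 0 ≤ w t :=
    mul_nonneg (rpow_mul_one_sub_rpow_nonneg _ _ ht) (rpow_nonneg (hbase ht).le _)
  have hw_int : IntervalIntegrable w volume 0 1 := by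
    refine (intervalIntegrable_rpow_mul_one_sub_rpow hb (sub_pos.2 hc)).mul_continuousOn ?_
    rw [Set.uIcc_of_le zero_le_one]
    exact ContinuousOn.rpow_const (by fun_prop) fun t ht => Or.inl (hbase ht).ne'
  have hmono : ∫ t in (0 : ℝ)..1, w t * oneF1 α β (-p / (t * (1 - t))) ≤
      ∫ t in (0 : ℝ)..1, w t * K := by
    simp only [intervalIntegral.integral_of_le zero_le_one, integral_Ioc_eq_integral_Ioo]
    -- Nonnegativity spares proving that the left-hand integrand is measurable.
    refine integral_mono_of_nonneg ?_
      ((hw_int.mul_const K).1.mono_set Set.Ioo_subset_Ioc_self) ?_ <;>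
      filter_upwards [ae_restrict_mem measurableSet_Ioo] with t ht
    · exact mul_nonneg (hw_nonneg (Set.Ioo_subset_Icc_self ht)) (oneF1_nonneg hα hβ _)
    · exact mul_le_mul_of_nonneg_left (hK t ht) (hw_nonneg (Set.Ioo_subset_Icc_self ht))
  calc genTwoF1 α β p a b c z
      ≤ 1 / eulerBeta b (c - b) * ∫ t in (0 : ℝ)..1, w t * K :=
        mul_le_mul_of_nonneg_left hmono (one_div_pos.2 hB).le
    _ = 1 / eulerBeta b (c - b) * (eulerBeta b (c - b) * twoF1 a b c z * K) := by
        rw [intervalIntegral.integral_mul_const, hw,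
          integral_rpow_mul_one_sub_rpow_mul_one_sub_mul_rpow a hb hc hz]
    _ = K * twoF1 a b c z := by field_simp

theorem stmt6_general (a b c α β p z : ℝ) (hb : 0 < b) (hc : b < c) (hα : 1 ≤ α)
    (hβ : α + 1 ≤ β) (hp : 0 < p) (hz : |z| < 1) :
    genTwoF1 α β p a b c z ≤
      lam (α - 1) (β - α - 1) / (4 * p * eulerBeta α (β - α)) * twoF1 a b c z :=
  genTwoF1_le_mul_twoF1 a hb hc (by linarith) (by linarith) hz
    fun _ ht => oneF1_neg_div_mul_one_sub_le hα hβ hp ht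

theorem stmt6 (a b c α β p z : ℝ) (ha : 0 < a) (hb : 1 ≤ b) (hc : b + 1 ≤ c)
    (hα : 1 ≤ α) (hβ : α + 1 ≤ β) (hp : 0 < p) (hz : |z| < 1) :
    genTwoF1 α β p a b c z ≤
      lam (α - 1) (β - α - 1) / (4 * p * eulerBeta α (β - α)) * twoF1 a b c z :=
  stmt6_general a b c α β p z (by linarith) (by linarith) hα hβ hp hz
end

section
/- Let 0 < b < c and z, z₀ ∈ ℝ with 0 < z ≤ z₀. Then |(e^{z₀} − 1)(₁F₁(b;c;z) − 1) − (e^z − 1)(₁F₁(b;c;z₀) − 1)| ≤ ((e^{z₀} − 1)²/4) · (z/z₀). -/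
open Real MeasureTheory

/-!
The inequality is Grüss's inequality for the series `∑ z₀ⁿ / n!` over `n ≥ 1`, whose sum is
`exp z₀ - 1`: with `t = z / z₀ ≤ 1`, the functions `tⁿ ∈ [0, t]` and `(b)_n / (c)_n ∈ [0, 1]` have
weighted sums `exp z - 1` and `₁F₁(b;c;z₀) - 1`, and their product has weighted sum
`₁F₁(b;c;z) - 1`.

Grüss's inequality bounds `∑ p * ∑ p f g - ∑ p f * ∑ p g`. If `x`, `y` are the distances of `∑ p f`
from its least and greatest possible values, and `u`, `v` those of `∑ p g`, then this quantity is
at most both `x v` and `u y`, whose geometric mean `√(x y) √(u v)` is at most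
`(x + y) (u + v) / 4`.
-/

theorem four_mul_le_add_mul_add {R : Type*} [CommRing R] [LinearOrder R] [IsStrictOrderedRing R]
    {a b c d x : R} (ha : 0 ≤ a) (hb : 0 ≤ b) (hc : 0 ≤ c) (hd : 0 ≤ d)
    (hx_ad : x ≤ a * d) (hx_cb : x ≤ c * b) : 4 * x ≤ (a + b) * (c + d) := by
  rcases le_total x 0 with hx | hx
  · exact (mul_nonpos_of_nonneg_of_nonpos zero_le_four hx).trans (by positivity)
  · refine le_of_sq_le_sq ?_ (by positivity)
    calc (4 * x) ^ 2 = 16 * (x * x) := by ring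
      _ ≤ 16 * (a * d * (c * b)) := by gcongr
      _ = 4 * a * b * (4 * c * d) := by ring
      _ ≤ (a + b) ^ 2 * (c + d) ^ 2 := by gcongr <;> exact four_mul_le_sq_add _ _
      _ = ((a + b) * (c + d)) ^ 2 := by ring

section Gruss

variable {ι : Type*} {p f g : ι → ℝ} {P F G H m M n N : ℝ}

theorem mem_Icc_of_hasSum_mul (hp : ∀ i, 0 ≤ p i) (hf : ∀ i, f i ∈ Set.Icc m M)
    (hP : HasSum p P) (hF : HasSum (fun i ↦ p i * f i) F) :
    F ∈ Set.Icc (P * m) (P * M) :=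
  ⟨hasSum_le (fun i ↦ mul_le_mul_of_nonneg_left (hf i).1 (hp i)) (hP.mul_right m) hF,
    hasSum_le (fun i ↦ mul_le_mul_of_nonneg_left (hf i).2 (hp i)) hF (hP.mul_right M)⟩

theorem mul_sub_mul_le_of_hasSum (hp : ∀ i, 0 ≤ p i) (hf : ∀ i, m ≤ f i) (hg : ∀ i, g i ≤ N)
    (hP : HasSum p P) (hF : HasSum (fun i ↦ p i * f i) F) (hG : HasSum (fun i ↦ p i * g i) G)
    (hH : HasSum (fun i ↦ p i * f i * g i) H) :
    P * H - F * G ≤ (F - P * m) * (P * N - G) := by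
  have hsum : HasSum (fun i ↦ p i * (f i - m) * (N - g i)) (F * N - H - P * (m * N) + G * m) :=
    (((hF.mul_right N).sub hH).sub (hP.mul_right (m * N))).add (hG.mul_right m)
      |>.congr_fun fun _ ↦ by ring
  have hsum_nonneg : 0 ≤ F * N - H - P * (m * N) + G * m :=
    hsum.nonneg fun i ↦ mul_nonneg (mul_nonneg (hp i) (sub_nonneg.2 (hf i))) (sub_nonneg.2 (hg i))
  -- The right side minus the left is `P * ∑ p (f - m) (N - g)`.
  linear_combination mul_nonneg (hP.nonneg hp) hsum_nonneg

theorem gruss_le_of_hasSum (hp : ∀ i, 0 ≤ p i) (hf : ∀ i, f i ∈ Set.Icc m M)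
    (hg : ∀ i, g i ∈ Set.Icc n N) (hP : HasSum p P) (hF : HasSum (fun i ↦ p i * f i) F)
    (hG : HasSum (fun i ↦ p i * g i) G) (hH : HasSum (fun i ↦ p i * f i * g i) H) :
    P * H - F * G ≤ P ^ 2 / 4 * ((M - m) * (N - n)) := by
  obtain ⟨hmF, hFM⟩ := mem_Icc_of_hasSum_mul hp hf hP hF
  obtain ⟨hnG, hGN⟩ := mem_Icc_of_hasSum_mul hp hg hP hG
  have hH_swap : HasSum (fun i ↦ p i * g i * f i) H := by simpa only [mul_right_comm] using hH
  have hle_fg : P * H - F * G ≤ (F - P * m) * (P * N - G) :=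
    mul_sub_mul_le_of_hasSum hp (fun i ↦ (hf i).1) (fun i ↦ (hg i).2) hP hF hG hH
  have hle_gf : P * H - F * G ≤ (G - P * n) * (P * M - F) :=
    mul_comm F G ▸
      mul_sub_mul_le_of_hasSum hp (fun i ↦ (hg i).1) (fun i ↦ (hf i).2) hP hG hF hH_swap
  have hfour := four_mul_le_add_mul_add (sub_nonneg.2 hmF) (sub_nonneg.2 hFM)
    (sub_nonneg.2 hnG) (sub_nonneg.2 hGN) hle_fg hle_gf
  linear_combination hfour / 4

theorem abs_gruss_le_of_hasSum (hp : ∀ i, 0 ≤ p i) (hf : ∀ i, f i ∈ Set.Icc m M)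
    (hg : ∀ i, g i ∈ Set.Icc n N) (hP : HasSum p P) (hF : HasSum (fun i ↦ p i * f i) F)
    (hG : HasSum (fun i ↦ p i * g i) G) (hH : HasSum (fun i ↦ p i * f i * g i) H) :
    |P * H - F * G| ≤ P ^ 2 / 4 * ((M - m) * (N - n)) := by
  have hneg := gruss_le_of_hasSum (g := -g) (G := -G) (H := -H) hp hf
    (fun i ↦ ⟨neg_le_neg (hg i).2, neg_le_neg (hg i).1⟩) hP hF
    (by simpa only [Pi.neg_apply, mul_neg] using hG.neg)
    (by simpa only [Pi.neg_apply, mul_neg] using hH.neg)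
  refine abs_le'.2 ⟨gruss_le_of_hasSum hp hf hg hP hF hG hH, ?_⟩
  linear_combination hneg

end Gruss

theorem hasSum_exp_sub_one (z : ℝ) :
    HasSum (fun n : ℕ ↦ z ^ (n + 1) / (n + 1).factorial) (Real.exp z - 1) := by
  have hexp : HasSum (fun n : ℕ ↦ z ^ n / n.factorial) (Real.exp z) :=
    Real.exp_eq_exp_ℝ ▸ NormedSpace.expSeries_div_hasSum_exp z
  simpa using (hasSum_nat_add_iff' 1).2 hexp

section Kummer

variable {b c : ℝ}

theorem poch_nonneg (hb : 0 ≤ b) (n : ℕ) : 0 ≤ poch b n :=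
  Finset.prod_nonneg fun _ _ ↦ by positivity

theorem poch_le_poch (hb : 0 ≤ b) (hbc : b ≤ c) (n : ℕ) : poch b n ≤ poch c n :=
  Finset.prod_le_prod (fun _ _ ↦ by positivity) fun _ _ ↦ by gcongr

theorem poch_div_poch_mem_Icc (hb : 0 ≤ b) (hbc : b ≤ c) (n : ℕ) :
    poch b n / poch c n ∈ Set.Icc 0 1 :=
  have hc := poch_nonneg (hb.trans hbc) n
  ⟨div_nonneg (poch_nonneg hb n) hc, div_le_one_of_le₀ (poch_le_poch hb hbc n) hc⟩

theorem hasSum_oneF1 (hb : 0 ≤ b) (hbc : b ≤ c) (z : ℝ) :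
    HasSum (fun n : ℕ ↦ z ^ n / n.factorial * (poch b n / poch c n)) (oneF1 b c z) := by
  have hsummable : Summable fun n : ℕ ↦ z ^ n / n.factorial * (poch b n / poch c n) := by
    refine (Real.summable_pow_div_factorial z).norm.of_norm_bounded fun n ↦ ?_
    obtain ⟨hratio_nonneg, hratio_le⟩ := poch_div_poch_mem_Icc hb hbc n
    rw [norm_mul, Real.norm_of_nonneg hratio_nonneg]
    exact mul_le_of_le_one_right (norm_nonneg _) hratio_le
  simpa only [oneF1, mul_comm, mul_div_assoc] using hsummable.hasSum

theorem hasSum_oneF1_sub_one (hb : 0 ≤ b) (hbc : b ≤ c) (z : ℝ) :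
    HasSum (fun n : ℕ ↦ z ^ (n + 1) / (n + 1).factorial * (poch b (n + 1) / poch c (n + 1)))
      (oneF1 b c z - 1) := by
  simpa [poch] using (hasSum_nat_add_iff' 1).2 (hasSum_oneF1 hb hbc z)

end Kummer

theorem stmt10 (b c z z₀ : ℝ) (hb : 0 < b) (hbc : b < c) (hz : 0 < z) (hzz : z ≤ z₀) :
    |(Real.exp z₀ - 1) * (oneF1 b c z - 1) - (Real.exp z - 1) * (oneF1 b c z₀ - 1)| ≤
      (Real.exp z₀ - 1) ^ 2 / 4 * (z / z₀) := by
  have hz₀ : 0 < z₀ := hz.trans_le hzz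
  have hscale (n : ℕ) : z₀ ^ (n + 1) / (n + 1).factorial * (z / z₀) ^ (n + 1) =
      z ^ (n + 1) / (n + 1).factorial := by
    rw [div_mul_eq_mul_div, ← mul_pow, mul_div_cancel₀ z hz₀.ne']
  have hpow (n : ℕ) : (z / z₀) ^ (n + 1) ∈ Set.Icc 0 (z / z₀) :=
    ⟨by positivity, pow_le_of_le_one (by positivity) (div_le_one_of_le₀ hzz hz₀.le) n.succ_ne_zero⟩
  have hgruss := abs_gruss_le_of_hasSum (fun n ↦ by positivity) hpow
    (fun n ↦ poch_div_poch_mem_Icc hb.le hbc.le (n + 1)) (hasSum_exp_sub_one z₀)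
    (by simpa only [hscale] using hasSum_exp_sub_one z) (hasSum_oneF1_sub_one hb.le hbc.le z₀)
    (by simpa only [hscale] using hasSum_oneF1_sub_one hb.le hbc.le z)
  simpa only [sub_zero, mul_one] using hgruss
end
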